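/- arXiv:2308.03748 — 2 statements merged into one kernel-verified Lean document; each statement's English description precedes it below -/
import Mathlib

section
/- Let n ≥ 1 and N = 2^n + 3. An n-element set A of positive integers is sumset-distinct modulo N if and only if there exist an integer λ coprime to N and signs ε_0, ε_1, …, ε_{n-1} ∈ {1, -1} such that the image of A in ℤ/Nℤ equals { ε_i · λ · 2^i (mod N) : 0 ≤ i ≤ n-1 }. -/
/-- An `n`-element set `A` of positive integers is *sumset-distinct modulo `N`*
if all subset sums (including the empty sum) are pairwise distinct modulo `N`. -/
def SumsetDistinctMod (N : ℕ) (A : Finset ℕ) : Prop :=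
  ∀ B ⊆ A, ∀ C ⊆ A, (∑ x ∈ B, x) % N = (∑ x ∈ C, x) % N → B = C

/-!
Of the `2 ^ n + 3` residues, exactly three are not subset sums of `A`, and the symmetry
`t ↦ ∑ A - t` of the subset sums shows that these are `c`, `c + w`, `c - w` for some `c` and `w`.
Hence `∏ (1 + e a) = -e c * (1 + e w + e (-w))` for every nontrivial additive character `e`.
Characters with values in characteristic 3 and 2 show that `w` and all `a ∈ A` are units. Complex
characters give `|1 - e w| * ∏ |1 - e (2 a)| = |1 - e (3 w)| * ∏ |1 - e a|`. For an even Dirichlet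
character `χ ≠ 1` the value `L(1, χ)` is a combination of the numbers `log |1 - e k|`, so
`L(1, χ) ≠ 0` turns this relation into an equality up to signs of the multisets `{w} ∪ 2 A` and
`{3 w} ∪ A`. Doubling repeatedly from `w` therefore stays in `A` up to sign until it reaches
`2 ^ n w = -3 w`, and `w, 2 w, …, 2 ^ (n - 1) w` are as many as the elements of `A`.
-/

open Filter Topology Finset Real ZMod
open scoped ComplexOrder

section Polylogarithm

lemma abs_rpow_neg_succ_sub_rpow_neg_le {s : ℝ} (hs : s ∈ Set.Icc 1 2) (m : ℕ) :
    |((m : ℝ) + 1) ^ (-s) - (m : ℝ) ^ (-s)| ≤ 4 / ((m : ℝ) + 1) ^ 2 := by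
  obtain ⟨hs1, hs2⟩ := hs
  rcases m.eq_zero_or_pos with rfl | hm
  · simp [zero_rpow (show -s ≠ 0 by linarith)]
  have hm1 : (1 : ℝ) ≤ m := by exact_mod_cast hm
  set x : ℝ := m / (m + 1) with hx
  have hx1 : x ≤ 1 := (div_le_one (by positivity)).2 (by linarith)
  have factor : ((m : ℝ) + 1) ^ (-s) = (m : ℝ) ^ (-s) * x ^ s := by
    rw [hx, div_rpow (by positivity) (by positivity), rpow_neg (by positivity),
      rpow_neg (by positivity)]
    field_simp
  have bernoulli : 1 - x ^ s ≤ 2 / (m + 1) := by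
    have hx0 : 0 ≤ x := by positivity
    have h := one_add_mul_self_le_rpow_one_add (s := x - 1) (by linarith) hs1
    have hx' : x - 1 = -(1 / (m + 1)) := by rw [hx]; field_simp; ring
    have : s * (1 / ((m : ℝ) + 1)) ≤ 2 * (1 / (m + 1)) := by gcongr
    rw [add_sub_cancel, hx'] at h
    linarith [mul_one_div (2 : ℝ) (m + 1)]
  have decay : (m : ℝ) ^ (-s) ≤ 2 / (m + 1) := calc
    (m : ℝ) ^ (-s) ≤ (m : ℝ) ^ (-1 : ℝ) := rpow_le_rpow_of_exponent_le hm1 (by linarith)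
    _ = 1 / m := by rw [rpow_neg_one, one_div]
    _ ≤ 2 / (m + 1) := by rw [div_le_div_iff₀ (by positivity) (by positivity)]; linarith
  have hxs : 0 ≤ 1 - x ^ s := sub_nonneg.2 (rpow_le_one (by positivity) hx1 (by linarith))
  calc |((m : ℝ) + 1) ^ (-s) - (m : ℝ) ^ (-s)|
      = (m : ℝ) ^ (-s) * (1 - x ^ s) := by
        rw [factor, abs_sub_comm, ← mul_one_sub, abs_of_nonneg (by positivity)]
    _ ≤ 2 / (m + 1) * (2 / (m + 1)) := by gcongr
    _ = 4 / ((m : ℝ) + 1) ^ 2 := by field_simp; norm_num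

/-- `(1 - z) Li_s(z)`, where `Li_s(z) = ∑ zᵐ / mˢ` is the polylogarithm, in the form it takes after
summation by parts. Unlike the series of `Li_s`, this one converges uniformly on the whole closed
unit disc down to `s = 1`. The term `m = 0` relies on `0 ^ (-s) = 0`. -/
noncomputable def polylogByParts (z : ℂ) (s : ℝ) : ℂ :=
  ∑' m : ℕ, z ^ (m + 1) * ((((m : ℝ) + 1) ^ (-s) - (m : ℝ) ^ (-s) : ℝ) : ℂ)

lemma summable_const_div_natCast_add_one_sq (c : ℝ) :
    Summable fun m : ℕ ↦ c / ((m : ℝ) + 1) ^ 2 := by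
  have h := (summable_nat_add_iff 1).2 (Real.summable_one_div_nat_pow.2 one_lt_two)
  simpa [div_eq_mul_inv] using h.mul_left c

lemma continuousOn_polylogByParts :
    ContinuousOn (fun p : ℂ × ℝ ↦ polylogByParts p.1 p.2)
      (Metric.closedBall 0 1 ×ˢ Set.Icc 1 2) := by
  refine continuousOn_tsum (fun m ↦ ?_) (summable_const_div_natCast_add_one_sq 4) ?_
  · have coeff : ContinuousOn (fun s : ℝ ↦ ((m : ℝ) + 1) ^ (-s) - (m : ℝ) ^ (-s))
        (Set.Icc 1 2) := by
      rcases m.eq_zero_or_pos with rfl | hm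
      · exact (continuousOn_const (c := (1 : ℝ))).congr fun s hs ↦ by
          simp [zero_rpow (show -s ≠ 0 by linarith [hs.1])]
      · have hm' : (m : ℝ) ≠ 0 := by positivity
        fun_prop (disch := first | assumption | positivity)
    exact (continuous_fst.pow _).continuousOn.mul <|
      Complex.continuous_ofReal.comp_continuousOn <| coeff.comp continuousOn_snd fun p hp ↦ hp.2
  · rintro m ⟨z, s⟩ ⟨hz, hs⟩
    rw [mem_closedBall_zero_iff] at hz
    rw [norm_mul, norm_pow, Complex.norm_real, Real.norm_eq_abs]
    exact (mul_le_of_le_one_left (abs_nonneg _) (pow_le_one₀ (norm_nonneg z) hz)).trans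
      (abs_rpow_neg_succ_sub_rpow_neg_le hs m)

lemma one_sub_mul_tsum_pow_mul {z : ℂ} {f : ℕ → ℂ} (f0 : f 0 = 0)
    (hf : Summable fun m ↦ z ^ m * f m) :
    (1 - z) * ∑' m, z ^ m * f m = ∑' m, z ^ (m + 1) * (f (m + 1) - f m) := by
  have succ_part : Summable fun m ↦ z ^ (m + 1) * f (m + 1) := (summable_nat_add_iff 1).2 hf
  have mul_part : Summable fun m ↦ z ^ (m + 1) * f m :=
    (hf.mul_left z).congr fun m ↦ by ring
  calc (1 - z) * ∑' m, z ^ m * f m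
      = ∑' m, z ^ m * f m - ∑' m, z * (z ^ m * f m) := by rw [tsum_mul_left]; ring
    _ = ∑' m, z ^ (m + 1) * f (m + 1) - ∑' m, z ^ (m + 1) * f m := by
        rw [hf.tsum_eq_zero_add, f0, mul_zero, zero_add]
        simp only [pow_succ', mul_assoc]
    _ = ∑' m, z ^ (m + 1) * (f (m + 1) - f m) := by
        rw [← succ_part.tsum_sub mul_part]
        simp only [mul_sub]

lemma polylogByParts_eq {z : ℂ} {s : ℝ} (hs : s ≠ 0) {l : ℂ}
    (h : HasSum (fun m : ℕ ↦ z ^ m * (((m : ℝ) ^ (-s) : ℝ) : ℂ)) l) :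
    polylogByParts z s = (1 - z) * l := by
  rw [← h.tsum_eq, one_sub_mul_tsum_pow_mul (by simp [hs]) h.summable]
  simp [polylogByParts]

lemma one_sub_mem_slitPlane {z : ℂ} (hz : ‖z‖ ≤ 1) (hz1 : z ≠ 1) : 1 - z ∈ Complex.slitPlane := by
  refine Or.inl ?_
  rw [Complex.sub_re, Complex.one_re, sub_pos]
  refine lt_of_le_of_ne ((Complex.re_le_norm z).trans hz) fun hre ↦ hz1 ?_
  have hnorm : ‖z‖ = 1 := hz.antisymm (hre ▸ Complex.re_le_norm z)
  have hnonneg : 0 ≤ z := Complex.re_eq_norm.1 (hre.trans hnorm.symm)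
  exact Complex.ext hre (Complex.nonneg_iff.1 hnonneg).2.symm

lemma polylogByParts_one_of_norm_lt_one {z : ℂ} (hz : ‖z‖ < 1) :
    polylogByParts z 1 = (1 - z) * -Complex.log (1 - z) := by
  refine polylogByParts_eq one_ne_zero ?_
  simpa [Real.rpow_neg_one, div_eq_mul_inv] using Complex.hasSum_taylorSeries_neg_log hz

lemma polylogByParts_one {z : ℂ} (hz : ‖z‖ ≤ 1) (hz1 : z ≠ 1) :
    polylogByParts z 1 = (1 - z) * -Complex.log (1 - z) := by
  have interior : Set.EqOn (polylogByParts · 1) (fun z ↦ (1 - z) * -Complex.log (1 - z))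
      (Metric.ball 0 1) := fun z hz ↦ polylogByParts_one_of_norm_lt_one (mem_ball_zero_iff.1 hz)
  refine interior.of_subset_closure (t := Metric.closedBall 0 1 \ {1}) ?_ ?_ ?_ ?_
    ⟨mem_closedBall_zero_iff.2 hz, hz1⟩
  · exact continuousOn_polylogByParts.comp (f := fun z : ℂ ↦ (z, (1 : ℝ))) (by fun_prop)
      fun z hz ↦ ⟨hz.1, by norm_num⟩
  · have hlog : ContinuousOn (fun z : ℂ ↦ Complex.log (1 - z)) (Metric.closedBall 0 1 \ {1}) :=
      ContinuousOn.clog (by fun_prop) fun z hz ↦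
        one_sub_mem_slitPlane (mem_closedBall_zero_iff.1 hz.1) hz.2
    fun_prop
  · exact fun z hz ↦ ⟨Metric.ball_subset_closedBall hz, by rintro rfl; simp at hz⟩
  · rw [closure_ball _ one_ne_zero]
    exact Set.sdiff_subset

end Polylogarithm

section PeriodicZeta

open HurwitzZeta

lemma toCircle_ne_one {a : UnitAddCircle} (ha : a ≠ 0) : (AddCircle.toCircle a : ℂ) ≠ 1 := by
  rw [← Circle.coe_one, Ne, Circle.coe_inj, ← AddCircle.toCircle_zero (T := 1),
    (AddCircle.injective_toCircle one_ne_zero).eq_iff]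
  exact ha

lemma hasSum_toCircle_pow_mul_rpow_neg (a : UnitAddCircle) {s : ℝ} (hs : 1 < s) :
    HasSum (fun m : ℕ ↦ (AddCircle.toCircle a : ℂ) ^ m * (((m : ℝ) ^ (-s) : ℝ) : ℂ))
      (expZeta a s) := by
  induction a using QuotientAddGroup.induction_on with | H x => ?_
  convert hasSum_expZeta_of_one_lt_re x (s := s) (by simpa using hs) using 2 with m
  rw [AddCircle.toCircle_apply_mk, Circle.coe_exp, ← Complex.exp_nat_mul,
    Complex.ofReal_cpow m.cast_nonneg, Complex.ofReal_neg, Complex.cpow_neg, ← div_eq_mul_inv]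
  push_cast
  ring_nf

lemma expZeta_one {a : UnitAddCircle} (ha : a ≠ 0) :
    expZeta a 1 = -Complex.log (1 - AddCircle.toCircle a) := by
  set z : ℂ := (AddCircle.toCircle a : ℂ)
  have hz1 : ‖z‖ ≤ 1 := (Circle.norm_coe _).le
  have hne : z ≠ 1 := toCircle_ne_one ha
  have left : Tendsto (fun s : ℝ ↦ (1 - z) * expZeta a s) (𝓝[>] 1)
      (𝓝 ((1 - z) * expZeta a 1)) := by
    have : Continuous fun s : ℝ ↦ (1 - z) * expZeta a s := continuous_const.mul <|
      (differentiable_expZeta_of_ne_zero ha).continuous.comp Complex.continuous_ofReal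
    simpa using (this.tendsto 1).mono_left nhdsWithin_le_nhds
  have right : Tendsto (polylogByParts z) (𝓝[>] 1) (𝓝 (polylogByParts z 1)) := by
    have : ContinuousOn (polylogByParts z) (Set.Icc 1 2) :=
      continuousOn_polylogByParts.comp (f := fun s : ℝ ↦ (z, s)) (by fun_prop)
        fun s hs ↦ ⟨mem_closedBall_zero_iff.2 hz1, hs⟩
    exact (this 1 (by norm_num)).mono_of_mem_nhdsWithin (Icc_mem_nhdsGT one_lt_two)
  have agree : ∀ᶠ s : ℝ in 𝓝[>] 1, polylogByParts z s = (1 - z) * expZeta a s := by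
    filter_upwards [self_mem_nhdsWithin] with s (hs : 1 < s)
    exact polylogByParts_eq (by positivity) (hasSum_toCircle_pow_mul_rpow_neg a hs)
  have limits := tendsto_nhds_unique left (right.congr' agree)
  rw [polylogByParts_one hz1 hne] at limits
  exact mul_left_cancel₀ (sub_ne_zero.2 hne.symm) limits

lemma cosZeta_one {a : UnitAddCircle} (ha : a ≠ 0) :
    cosZeta a 1 = -(Real.log ‖1 - (AddCircle.toCircle a : ℂ)‖ : ℂ) := by
  have hconj : (1 - AddCircle.toCircle (-a) : ℂ) = starRingEnd ℂ (1 - AddCircle.toCircle a) := by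
    rw [AddCircle.toCircle_neg, Circle.coe_inv_eq_conj, map_sub, map_one]
  have harg := Complex.slitPlane_arg_ne_pi <|
    one_sub_mem_slitPlane (Circle.norm_coe (AddCircle.toCircle a)).le (toCircle_ne_one ha)
  rw [cosZeta_eq, expZeta_one ha, expZeta_one (neg_ne_zero.2 ha), hconj, Complex.log_conj _ harg,
    ← neg_add, Complex.add_conj, Complex.log_re]
  push_cast
  ring

end PeriodicZeta

section DirichletCharacters

variable {N : ℕ} [NeZero N]

lemma stdAddChar_ne_one {k : ZMod N} (hk : k ≠ 0) : stdAddChar k ≠ 1 := by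
  rw [← AddChar.map_zero_eq_one (stdAddChar (N := N))]
  exact injective_stdAddChar.ne hk

lemma expZeta_toAddCircle_neg_one {k : ZMod N} (hk : k ≠ 0) :
    HurwitzZeta.expZeta (toAddCircle (-k)) 1 =
      -(Real.log ‖1 - stdAddChar k‖ : ℂ)
        - Complex.I * HurwitzZeta.sinZeta (toAddCircle k) 1 := by
  have hcos : HurwitzZeta.cosZeta (toAddCircle k) 1 = -(Real.log ‖1 - stdAddChar k‖ : ℂ) :=
    cosZeta_one (toAddCircle_eq_zero.not.2 hk)
  rw [HurwitzZeta.expZeta, map_neg, HurwitzZeta.cosZeta_neg, HurwitzZeta.sinZeta_neg, hcos]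
  ring

lemma LFunction_dft_one_of_even {Φ : ZMod N → ℂ} (hΦ : Function.Even Φ) (hΦ0 : Φ 0 = 0) :
    LFunction (𝓕 Φ) 1 = -∑ k, Φ k * (Real.log ‖1 - stdAddChar k‖ : ℂ) := by
  have sin_part : ∑ k, Φ k * HurwitzZeta.sinZeta (toAddCircle k) 1 = 0 :=
    Function.Odd.sum_eq_zero <| hΦ.mul_odd fun k ↦ by rw [map_neg, HurwitzZeta.sinZeta_neg]
  have term (k : ZMod N) : Φ k * HurwitzZeta.expZeta (toAddCircle (-k)) 1 =
      -(Φ k * (Real.log ‖1 - stdAddChar k‖ : ℂ))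
        - Complex.I * (Φ k * HurwitzZeta.sinZeta (toAddCircle k) 1) := by
    rcases eq_or_ne k 0 with rfl | hk
    · simp [hΦ0]
    · rw [expZeta_toAddCircle_neg_one hk]
      ring
  rw [LFunction_dft Φ (Or.inl hΦ0), sum_congr rfl fun k _ ↦ term k, sum_sub_distrib,
    ← mul_sum, sin_part, sum_neg_distrib, mul_zero, sub_zero]

lemma sum_dft_mul_log_ne_zero {χ : DirichletCharacter ℂ N} (hχ : χ ≠ 1) (hχe : χ.Even) :
    ∑ k, 𝓕 χ k * (Real.log ‖1 - stdAddChar k‖ : ℂ) ≠ 0 := by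
  have dft_zero : 𝓕 χ 0 = 0 := by rw [dft_apply_zero, MulChar.sum_eq_zero_of_ne_one hχ]
  have dft_dft_eq : 𝓕 (𝓕 χ) = fun k ↦ (N : ℂ) • χ k := by
    simp only [dft_dft, hχe.eval_neg]
  have key := LFunction_dft_one_of_even (dft_even_iff.2 hχe.to_fun) dft_zero
  have scale : LFunction (fun k ↦ (N : ℂ) • χ k) 1 = N * LFunction χ 1 := by
    simp only [LFunction, smul_eq_mul, mul_assoc, ← mul_sum]
    ring
  rw [dft_dft_eq, scale] at key
  have hL : (N : ℂ) * LFunction χ 1 ≠ 0 := mul_ne_zero (NeZero.ne _)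
    (DirichletCharacter.LFunction_apply_one_ne_zero hχ)
  exact fun h0 ↦ hL (by rw [key, h0, neg_zero])

lemma sum_dft_mul_comp_unitMul (χ : DirichletCharacter ℂ N) (F : ZMod N → ℂ) (u : (ZMod N)ˣ) :
    ∑ k, 𝓕 χ k * F (u * k) = χ u * ∑ k, 𝓕 χ k * F k := by
  have twist (k : ZMod N) : 𝓕 χ k = χ u * 𝓕 χ (u * k) := by
    rw [← Units.inv_mul_cancel_left u k, ← dft_comp_unitMul, Units.inv_mul_cancel_left]
    simp only [map_mul, dft_apply, smul_eq_mul, mul_sum]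
    exact sum_congr rfl fun j _ ↦ by ring
  rw [mul_sum, ← Equiv.sum_comp (Units.mulLeft u) fun k ↦ χ u * (𝓕 χ k * F k)]
  exact sum_congr rfl fun k _ ↦ by rw [twist k, mul_assoc, Units.mulLeft_apply]

lemma sum_dirichletCharacter_eq_of_prod_norm_eq {ι : Type*} [Fintype ι] {x y : ι → ZMod N}
    (hx : ∀ i, IsUnit (x i)) (hy : ∀ i, IsUnit (y i))
    (h : ∀ k ≠ 0, ∏ i, ‖1 - stdAddChar (x i * k)‖ = ∏ i, ‖1 - stdAddChar (y i * k)‖)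
    {χ : DirichletCharacter ℂ N} (hχ : χ.Even) : ∑ i, χ (x i) = ∑ i, χ (y i) := by
  rcases eq_or_ne χ 1 with rfl | hχ1
  · simp only [MulChar.one_apply (hx _), MulChar.one_apply (hy _)]
  let ℓ (k : ZMod N) : ℝ := Real.log ‖1 - stdAddChar k‖
  have log_prod {z : ι → ZMod N} (hz : ∀ i, IsUnit (z i)) {k : ZMod N} (hk : k ≠ 0) :
      ∑ i, ℓ (z i * k) = Real.log (∏ i, ‖1 - stdAddChar (z i * k)‖) :=
    (Real.log_prod fun i _ ↦ norm_ne_zero_iff.2 <| sub_ne_zero.2 <| Ne.symm <|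
      stdAddChar_ne_one <| (hz i).mul_right_eq_zero.not.2 hk).symm
  have log_eq (k : ZMod N) : ∑ i, ℓ (x i * k) = ∑ i, ℓ (y i * k) := by
    rcases eq_or_ne k 0 with rfl | hk
    · simp only [mul_zero]
    · rw [log_prod hx hk, log_prod hy hk, h k hk]
  have sum_eq {z : ι → ZMod N} (hz : ∀ i, IsUnit (z i)) :
      ∑ k, 𝓕 χ k * ((∑ i, ℓ (z i * k) : ℝ) : ℂ) = (∑ i, χ (z i)) * ∑ k, 𝓕 χ k * (ℓ k : ℂ) := by
    have twist (i : ι) : χ (z i) * ∑ k, 𝓕 χ k * (ℓ k : ℂ) = ∑ k, 𝓕 χ k * (ℓ (z i * k) : ℂ) :=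
      (sum_dft_mul_comp_unitMul χ (fun k ↦ (ℓ k : ℂ)) (hz i).unit).symm
    rw [sum_mul, sum_congr rfl fun i _ ↦ twist i, sum_comm]
    simp only [Complex.ofReal_sum, mul_sum]
  refine mul_right_cancel₀ (sum_dft_mul_log_ne_zero hχ1 hχ) ?_
  rw [← sum_eq hx, ← sum_eq hy]
  simp only [log_eq]

lemma exists_eq_or_eq_neg_of_prod_norm_eq {ι : Type*} [Fintype ι] {x y : ι → ZMod N}
    (hx : ∀ i, IsUnit (x i)) (hy : ∀ i, IsUnit (y i))
    (h : ∀ k ≠ 0, ∏ i, ‖1 - stdAddChar (x i * k)‖ = ∏ i, ‖1 - stdAddChar (y i * k)‖) (i : ι) :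
    ∃ j, x i = y j ∨ x i = -y j := by
  have symm_sum (χ : DirichletCharacter ℂ N) :
      ∑ j, (χ (x j) + χ (-x j)) = ∑ j, (χ (y j) + χ (-y j)) := by
    rcases χ.even_or_odd with hχ | hχ
    · simp only [hχ.eval_neg, sum_add_distrib,
        sum_dirichletCharacter_eq_of_prod_norm_eq hx hy h hχ]
    · simp only [hχ.eval_neg, add_neg_cancel]
  let δ (b : ZMod N) : ℕ := if x i = b then N.totient else 0
  have orthogonality (z : ι → ZMod N) :
      ∑ χ : DirichletCharacter ℂ N, χ (x i)⁻¹ * ∑ j, (χ (z j) + χ (-z j)) =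
        ((∑ j, (δ (z j) + δ (-z j)) : ℕ) : ℂ) := by
    simp only [mul_sum, mul_add]
    rw [sum_comm]
    simp only [sum_add_distrib, DirichletCharacter.sum_char_inv_mul_char_eq ℂ (hx i), δ]
    push_cast
    rfl
  have count : ∑ j, (δ (x j) + δ (-x j)) = ∑ j, (δ (y j) + δ (-y j)) := by
    rw [← Nat.cast_inj (R := ℂ), ← orthogonality, ← orthogonality]
    simp only [symm_sum]
  by_contra! hne
  have vanish : ∑ j, (δ (y j) + δ (-y j)) = 0 := by
    simp only [δ, (hne _).1, (hne _).2, if_false, add_zero, sum_const_zero]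
  have self_zero : δ (x i) = 0 :=
    (add_eq_zero.1 <| sum_eq_zero_iff.1 (count.trans vanish) i (mem_univ i)).1
  simp [δ, NeZero.ne N] at self_zero

end DirichletCharacters

section SubsetSums

variable {ι G : Type*} [AddCommGroup G]

/-- The family `(g i)`, `i ∈ A`, is dissociated: its `2 ^ #A` subset sums are pairwise distinct.
Unlike Mathlib's `AddDissociated`, this speaks about families rather than sets, so that it applies
to the residues of a set of integers before these are known to be distinct. -/
def DissociatedOn (g : ι → G) (A : Finset ι) : Prop :=
  Set.InjOn (fun B ↦ ∑ i ∈ B, g i) (A.powerset : Set (Finset ι))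

/-- The set of all sums of subfamilies of `(g i)`, `i ∈ A`, including the empty sum. -/
def subsetSums [DecidableEq G] (g : ι → G) (A : Finset ι) : Finset G :=
  A.powerset.image fun B ↦ ∑ i ∈ B, g i

lemma sumsetDistinctMod_iff {N : ℕ} {A : Finset ℕ} :
    SumsetDistinctMod N A ↔ DissociatedOn (Nat.cast : ℕ → ZMod N) A := by
  have mod_iff (B C : Finset ℕ) : ∑ x ∈ B, (x : ZMod N) = ∑ x ∈ C, (x : ZMod N) ↔
      (∑ x ∈ B, x) % N = (∑ x ∈ C, x) % N := by
    rw [← Nat.cast_sum, ← Nat.cast_sum, natCast_eq_natCast_iff']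
  simp only [SumsetDistinctMod, DissociatedOn, Set.InjOn, mem_coe, mem_powerset, mod_iff]

namespace DissociatedOn

variable {g h : ι → G} {A : Finset ι}

lemma card_subsetSums [DecidableEq G] (hg : DissociatedOn g A) : #(subsetSums g A) = 2 ^ #A := by
  rw [subsetSums, card_image_of_injOn hg, card_powerset]

lemma injOn (hg : DissociatedOn g A) : Set.InjOn g A := by
  intro i hi j hj hij
  exact singleton_injective <| hg (by simpa using hi) (by simpa using hj) (by simpa using hij)

lemma comp_iff {κ : Type*} [DecidableEq κ] {f : κ → G} {e : ι → κ} (he : Set.InjOn e A) :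
    DissociatedOn f (A.image e) ↔ DissociatedOn (f ∘ e) A := by
  have himage := image_injOn_powerset_of_injOn he
  have hsum {B : Finset ι} (hB : B ∈ (A.powerset : Set (Finset ι))) :
      ∑ k ∈ B.image e, f k = ∑ i ∈ B, (f ∘ e) i :=
    sum_image (he.mono <| coe_subset.2 <| mem_powerset.1 hB)
  rw [DissociatedOn, powerset_image, coe_image, ← himage.comp_iff]
  exact Set.EqOn.injOn_iff fun B hB ↦ hsum hB

lemma of_image_eq [DecidableEq G] {κ : Type*} {f : κ → G} {B : Finset κ} (hf : DissociatedOn f B)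
    (himage : A.image g = B.image f) (hcard : #A = #B) : DissociatedOn g A := by
  have hg : Set.InjOn g A := by
    rw [← card_image_iff, himage, card_image_of_injOn hf.injOn, hcard]
  have hid : DissociatedOn id (B.image f) := (comp_iff hf.injOn).2 hf
  rw [← himage] at hid
  exact (comp_iff hg).1 hid

lemma of_eq_or_eq_neg (hg : DissociatedOn g A) (hh : ∀ i ∈ A, h i = g i ∨ h i = -g i) :
    DissociatedOn h A := by
  classical
  let P := {i ∈ A | h i ≠ g i}
  have flip {B : Finset ι} (hB : B ⊆ A) :
      ∑ i ∈ B, h i + ∑ i ∈ P, g i = ∑ i ∈ symmDiff B P, g i := by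
    have outside : ∑ i ∈ B \ P, h i = ∑ i ∈ B \ P, g i := sum_congr rfl fun i hi ↦ by
      by_contra hne
      exact (mem_sdiff.1 hi).2 <| mem_filter.2 ⟨hB (mem_sdiff.1 hi).1, hne⟩
    have inside : ∑ i ∈ B ∩ P, h i = -∑ i ∈ B ∩ P, g i := by
      rw [← sum_neg_distrib]
      refine sum_congr rfl fun i hi ↦ ?_
      have hiP := mem_filter.1 (mem_inter.1 hi).2
      exact (hh i hiP.1).resolve_left hiP.2
    rw [symmDiff_def, sup_eq_union, sum_union disjoint_sdiff_sdiff,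
      ← sum_inter_add_sum_sdiff B P h, ← sum_inter_add_sum_sdiff P B g, outside, inside,
      inter_comm P B]
    abel
  intro B hB C hC hBC
  rw [mem_coe, mem_powerset] at hB hC
  have hP : P ⊆ A := filter_subset _ _
  refine symmDiff_left_injective P <| hg ?_ ?_ ?_
  · exact mem_powerset.2 <| symmDiff_le_sup.trans <| union_subset hB hP
  · exact mem_powerset.2 <| symmDiff_le_sup.trans <| union_subset hC hP
  · simp only at hBC ⊢
    rw [← flip hB, ← flip hC, hBC]

lemma map {H : Type*} [AddCommGroup H] (hg : DissociatedOn g A) {φ : G →+ H}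
    (hφ : Function.Injective φ) : DissociatedOn (φ ∘ g) A := fun B hB C hC hBC ↦
  hg hB hC <| hφ <| by simpa only [map_sum, Function.comp_apply] using hBC

end DissociatedOn

lemma dissociatedOn_two_pow {n N : ℕ} (h : 2 ^ n ≤ N) :
    DissociatedOn (fun i ↦ (2 : ZMod N) ^ i) (range n) := by
  have bound {B : Finset ℕ} (hB : B ⊆ range n) : ∑ i ∈ B, 2 ^ i < N :=
    (Nat.geomSum_lt le_rfl fun i hi ↦ mem_range.1 (hB hi)).trans_le h
  intro B hB C hC hBC
  rw [mem_coe, mem_powerset] at hB hC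
  have hcast : ((∑ i ∈ B, 2 ^ i : ℕ) : ZMod N) = (∑ i ∈ C, 2 ^ i : ℕ) := by
    push_cast
    exact hBC
  rw [natCast_eq_natCast_iff', Nat.mod_eq_of_lt (bound hB), Nat.mod_eq_of_lt (bound hC)] at hcast
  exact geomSum_injective le_rfl hcast

end SubsetSums

section MissingSums

lemma eq_zero_of_neg_eq_self {G : Type*} [AddGroup G] (hG : Odd (Nat.card G)) {x : G}
    (hx : -x = x) : x = 0 := by
  have two_smul_zero : 2 • x = 0 := by rw [two_nsmul]; nth_rw 1 [← hx]; exact neg_add_cancel x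
  exact (nsmulCoprime hG.coprime_two_right).injective (by simpa using two_smul_zero)

lemma exists_eq_of_neg_mem_of_card_eq_three {G : Type*} [AddGroup G] [DecidableEq G]
    (hG : Odd (Nat.card G)) {M : Finset G} (hM : ∀ x ∈ M, -x ∈ M) (hcard : #M = 3) :
    ∃ w, -w ≠ w ∧ M = {0, w, -w} := by
  obtain ⟨w, hw, hw0⟩ := exists_mem_ne (by omega : 1 < #M) 0
  have hww : -w ≠ w := fun h ↦ hw0 (eq_zero_of_neg_eq_self hG h)
  have hpair : #({w, -w} : Finset G) = 2 := card_pair hww.symm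
  have hsub : {w, -w} ⊆ M := by simp [insert_subset_iff, hw, hM w hw]
  obtain ⟨y, hy⟩ := card_eq_one.1 <|
    show #(M \ {w, -w}) = 1 by rw [card_sdiff_of_subset hsub, hpair, hcard]
  have hyM : y ∈ M \ {w, -w} := hy ▸ mem_singleton_self y
  have hM_eq : M = {y, w, -w} := by
    rw [← sdiff_union_of_subset hsub, hy, singleton_union]
  obtain ⟨hyM, hy_ne⟩ := mem_sdiff.1 hyM
  have hneg : -y ∈ M := hM y hyM
  simp only [hM_eq, mem_insert, mem_singleton, not_or, neg_eq_iff_eq_neg (b := w), neg_inj]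
    at hneg hy_ne
  have hy0 : y = 0 := eq_zero_of_neg_eq_self hG <| hneg.resolve_right (by tauto)
  exact ⟨w, hww, hy0 ▸ hM_eq⟩

variable {ι G : Type*} [AddCommGroup G] {g : ι → G} {A : Finset ι}

lemma addChar_map_sum {R : Type*} [CommMonoid R] (e : AddChar G R) :
    e (∑ i ∈ A, g i) = ∏ i ∈ A, e (g i) :=
  map_prod e.toMonoidHom (fun i ↦ Multiplicative.ofAdd (g i)) A

variable [DecidableEq G]

lemma sum_sub_mem_subsetSums {t : G} (ht : t ∈ subsetSums g A) :
    ∑ i ∈ A, g i - t ∈ subsetSums g A := by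
  classical
  obtain ⟨B, hB, rfl⟩ := mem_image.1 ht
  refine mem_image.2 ⟨A \ B, mem_powerset.2 sdiff_subset, ?_⟩
  rw [eq_sub_iff_add_eq, sum_sdiff (mem_powerset.1 hB)]

lemma DissociatedOn.exists_compl_subsetSums_eq [Fintype G] (hg : DissociatedOn g A)
    (hcard : Fintype.card G = 2 ^ #A + 3) (hG : Odd (Nat.card G)) :
    ∃ c w, -w ≠ w ∧ (subsetSums g A)ᶜ = {c, c + w, c - w} := by
  obtain ⟨c, hc⟩ : ∃ c, c + c = ∑ i ∈ A, g i := by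
    obtain ⟨c, hc⟩ := (nsmulCoprime hG.coprime_two_right).surjective (∑ i ∈ A, g i)
    exact ⟨c, by simpa [two_nsmul] using hc⟩
  let M := (subsetSums g A)ᶜ.map (Equiv.addLeft (-c)).toEmbedding
  have mem_M {x : G} : x ∈ M ↔ c + x ∉ subsetSums g A := by
    simp [M, mem_map_equiv]
  have hM (x : G) (hx : x ∈ M) : -x ∈ M := by
    rw [mem_M] at hx ⊢
    refine fun hmem ↦ hx ?_
    have hreflect := sum_sub_mem_subsetSums hmem
    rwa [← hc, ← sub_eq_add_neg, add_sub_sub_cancel] at hreflect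
  have hM_card : #M = 3 := by
    rw [card_map, card_compl, hg.card_subsetSums, hcard, Nat.add_sub_cancel_left]
  obtain ⟨w, hw, hM_eq⟩ := exists_eq_of_neg_mem_of_card_eq_three hG hM hM_card
  refine ⟨c, w, hw, ?_⟩
  ext t
  obtain ⟨x, rfl⟩ : ∃ x, t = c + x := ⟨t - c, (add_sub_cancel c t).symm⟩
  rw [mem_compl, ← mem_M, hM_eq]
  simp only [mem_insert, mem_singleton, sub_eq_add_neg, add_eq_left, add_right_inj]

lemma DissociatedOn.prod_one_add_addChar {R : Type*} [CommSemiring R] (hg : DissociatedOn g A)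
    (e : AddChar G R) : ∏ i ∈ A, (1 + e (g i)) = ∑ t ∈ subsetSums g A, e t := by
  rw [prod_one_add, subsetSums, sum_image hg]
  simp only [addChar_map_sum]

lemma DissociatedOn.prod_one_add_addChar_eq_neg [Fintype G] {R : Type*} [CommRing R] [IsDomain R]
    (hg : DissociatedOn g A) {c w : G} (hw : -w ≠ w)
    (hmiss : (subsetSums g A)ᶜ = {c, c + w, c - w}) {e : AddChar G R} (he : e ≠ 1) :
    ∏ i ∈ A, (1 + e (g i)) = -(e c * (1 + e w + e (-w))) := by
  have hw0 : w ≠ 0 := fun h ↦ hw (by simp [h])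
  have missing : ∑ t ∈ (subsetSums g A)ᶜ, e t = e c * (1 + e w + e (-w)) := by
    rw [hmiss, sub_eq_add_neg, sum_insert (by simp [hw0]), sum_pair (by simpa using hw.symm)]
    simp only [AddChar.map_add_eq_mul]
    ring
  rw [hg.prod_one_add_addChar, eq_neg_iff_add_eq_zero, ← missing, sum_add_sum_compl,
    AddChar.sum_eq_zero_of_ne_one he]

end MissingSums

section Units

variable {N : ℕ} [NeZero N]

lemma exists_addChar_ne_one_apply_eq_one {K : Type*} [Field K] [IsAlgClosed K] (hN : (N : K) ≠ 0)
    {b : ZMod N} (hb : ¬IsUnit b) : ∃ e : AddChar (ZMod N) K, e ≠ 1 ∧ e b = 1 := by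
  set d := b.val.gcd N
  have hdN : d ∣ N := Nat.gcd_dvd_right _ _
  have hd1 : d ≠ 1 := by rwa [← natCast_zmod_val b, isUnit_iff_coprime] at hb
  have : NeZero (d : K) := ⟨fun h0 ↦ hN (zero_dvd_iff.1 (h0 ▸ Nat.cast_dvd_cast hdN))⟩
  obtain ⟨ζ, hζ⟩ := HasEnoughRootsOfUnity.exists_primitiveRoot K d
  have hζN : ζ ^ N = 1 := (hζ.pow_eq_one_iff_dvd N).2 hdN
  refine ⟨AddChar.zmodChar N hζN, AddChar.ne_one_iff.2 ⟨(1 : ℕ), ?_⟩, ?_⟩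
  · rw [AddChar.zmodChar_apply', pow_one]
    exact hζ.ne_one <| Nat.one_lt_iff_ne_zero_and_ne_one.2
      ⟨(Nat.gcd_pos_of_pos_right _ (NeZero.pos N)).ne', hd1⟩
  · rw [AddChar.zmodChar_apply, hζ.pow_eq_one_iff_dvd]
    exact Nat.gcd_dvd_left _ _

lemma addChar_pow_card {G M : Type*} [AddGroup G] [Monoid M] (e : AddChar G M) (x : G) :
    e x ^ Nat.card G = 1 := by
  rw [← AddChar.map_nsmul_eq_pow, card_nsmul_eq_zero', AddChar.map_zero_eq_one]

variable {ι : Type*} {g : ι → ZMod N} {A : Finset ι} {c w : ZMod N}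

lemma DissociatedOn.isUnit_of_compl_subsetSums_eq (hg : DissociatedOn g A) (hw : -w ≠ w)
    (hmiss : (subsetSums g A)ᶜ = {c, c + w, c - w}) (h2 : Odd N) (h3 : N.Coprime 3) :
    IsUnit w := by
  let K := AlgebraicClosure (ZMod 3)
  by_contra hwu
  have hNK : (N : K) ≠ 0 := by
    rw [Ne, CharP.cast_eq_zero_iff K 3, ← Nat.prime_three.coprime_iff_not_dvd]
    exact h3.symm
  obtain ⟨e, he, hew⟩ := exists_addChar_ne_one_apply_eq_one hNK hwu
  have three_eq_zero : (3 : K) = 0 := by exact_mod_cast CharP.cast_eq_zero K 3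
  have prod_zero : ∏ i ∈ A, (1 + e (g i)) = 0 := by
    rw [hg.prod_one_add_addChar_eq_neg hw hmiss he, AddChar.map_neg_eq_inv, hew, inv_one]
    linear_combination -(e c) * three_eq_zero
  obtain ⟨i, -, hi⟩ := prod_eq_zero_iff.1 prod_zero
  have hpow := addChar_pow_card e (g i)
  rw [Nat.card_zmod, eq_neg_of_add_eq_zero_right hi, h2.neg_one_pow] at hpow
  have one_eq_zero : (1 : K) = 0 := by linear_combination three_eq_zero + hpow
  exact one_ne_zero one_eq_zero

lemma DissociatedOn.isUnit_of_mem (hg : DissociatedOn g A) (hw : -w ≠ w)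
    (hmiss : (subsetSums g A)ᶜ = {c, c + w, c - w}) (h2 : Odd N) (h3 : N.Coprime 3) {i : ι}
    (hi : i ∈ A) : IsUnit (g i) := by
  let K := AlgebraicClosure (ZMod 2)
  by_contra hgi
  have hNK : (N : K) ≠ 0 := by
    rw [Ne, CharP.cast_eq_zero_iff K 2]
    exact h2.not_two_dvd_nat
  obtain ⟨e, he, hei⟩ := exists_addChar_ne_one_apply_eq_one hNK hgi
  have two_eq_zero : (2 : K) = 0 := by exact_mod_cast CharP.cast_eq_zero K 2
  have prod_zero : ∏ i ∈ A, (1 + e (g i)) = 0 :=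
    prod_eq_zero hi (by rw [hei, one_add_one_eq_two, two_eq_zero])
  have cyclotomic : e w ^ 2 + e w + 1 = 0 := by
    rw [hg.prod_one_add_addChar_eq_neg hw hmiss he, AddChar.map_neg_eq_inv,
      neg_eq_zero] at prod_zero
    have hsum := (mul_eq_zero.1 prod_zero).resolve_left (e.val_isUnit c).ne_zero
    linear_combination e w * hsum - mul_inv_cancel₀ (e.val_isUnit w).ne_zero
  have hpow : e w ^ N = 1 := by simpa using addChar_pow_card e w
  have hpow3 : e w ^ 3 = 1 := by linear_combination (e w - 1) * cyclotomic
  have hew : e w = 1 := by simpa only [h3, pow_one] using pow_gcd_eq_one.2 ⟨hpow, hpow3⟩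
  have one_eq_zero : (1 : K) = 0 := by
    rw [hew] at cyclotomic
    linear_combination cyclotomic - two_eq_zero
  exact one_ne_zero one_eq_zero

end Units

section CyclotomicRelation

lemma norm_one_add_inv_add_self_mul {z : ℂ} (hz : ‖z‖ = 1) :
    ‖1 + z + z⁻¹‖ * ‖1 - z‖ = ‖1 - z ^ 3‖ := by
  have hz0 : z ≠ 0 := by rintro rfl; simp at hz
  calc ‖1 + z + z⁻¹‖ * ‖1 - z‖ = ‖z⁻¹ * (1 - z ^ 3)‖ := by
        rw [← norm_mul]
        congr 1
        field_simp
        ring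
    _ = ‖1 - z ^ 3‖ := by rw [norm_mul, norm_inv, hz, inv_one, one_mul]

lemma DissociatedOn.norm_one_sub_mul_prod_eq {ι G : Type*} [AddCommGroup G] [Fintype G]
    [DecidableEq G] {g : ι → G} {A : Finset ι} {c w : G} (hg : DissociatedOn g A) (hw : -w ≠ w)
    (hmiss : (subsetSums g A)ᶜ = {c, c + w, c - w}) {e : AddChar G ℂ} (he : e ≠ 1) :
    ‖1 - e w‖ * ∏ i ∈ A, ‖1 - e (2 • g i)‖ = ‖1 - e (3 • w)‖ * ∏ i ∈ A, ‖1 - e (g i)‖ := by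
  have norm_prod_one_add : ∏ i ∈ A, ‖1 + e (g i)‖ = ‖1 + e w + (e w)⁻¹‖ := by
    rw [← norm_prod, hg.prod_one_add_addChar_eq_neg hw hmiss he, norm_neg, norm_mul,
      AddChar.norm_apply, one_mul, AddChar.map_neg_eq_inv]
  have norm_one_sub_two (i : ι) : ‖1 - e (2 • g i)‖ = ‖1 + e (g i)‖ * ‖1 - e (g i)‖ := by
    rw [AddChar.map_nsmul_eq_pow, ← norm_mul]
    congr 1
    ring
  simp only [norm_one_sub_two, prod_mul_distrib, norm_prod_one_add]
  rw [AddChar.map_nsmul_eq_pow, ← norm_one_add_inv_add_self_mul (AddChar.norm_apply e w)]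
  ring

end CyclotomicRelation

section PowersOfTwo

lemma DissociatedOn.exists_elim_eq_or_eq_neg {N : ℕ} [NeZero N] {ι : Type*} {g : ι → ZMod N}
    {A : Finset ι} {c w : ZMod N} (hg : DissociatedOn g A) (hw : -w ≠ w)
    (hmiss : (subsetSums g A)ᶜ = {c, c + w, c - w}) (h2 : Odd N) (h3 : N.Coprime 3) (o : Option A) :
    ∃ o' : Option A, o.elim w (fun i ↦ 2 * g i) = o'.elim (3 * w) (fun i ↦ g i) ∨
      o.elim w (fun i ↦ 2 * g i) = -o'.elim (3 * w) (fun i ↦ g i) := by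
  have unit_w : IsUnit w := hg.isUnit_of_compl_subsetSums_eq hw hmiss h2 h3
  have unit_g (i : A) : IsUnit (g i) := hg.isUnit_of_mem hw hmiss h2 h3 i.2
  have unit_two : IsUnit (2 : ZMod N) := (isUnit_iff_coprime 2 N).2 h2.coprime_two_left
  have unit_three : IsUnit (3 : ZMod N) := (isUnit_iff_coprime 3 N).2 h3.symm
  have unit_left (o : Option A) : IsUnit (o.elim w fun i ↦ 2 * g i) := by
    rcases o with - | i
    exacts [unit_w, unit_two.mul (unit_g i)]
  have unit_right (o : Option A) : IsUnit (o.elim (3 * w) fun i ↦ g i) := by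
    rcases o with - | i
    exacts [unit_three.mul unit_w, unit_g i]
  refine exists_eq_or_eq_neg_of_prod_norm_eq unit_left unit_right (fun k hk ↦ ?_) o
  let e : AddChar (ZMod N) ℂ := stdAddChar.mulShift k
  have he : e ≠ 1 := isPrimitive_stdAddChar N hk
  have relation := hg.norm_one_sub_mul_prod_eq hw hmiss he
  simp only [e, AddChar.mulShift_apply, nsmul_eq_mul, mul_comm k, Nat.cast_ofNat] at relation
  simpa only [Fintype.prod_option, Option.elim_none, Option.elim_some,
    prod_coe_sort A fun i ↦ ‖1 - stdAddChar (2 * g i * k)‖,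
    prod_coe_sort A fun i ↦ ‖1 - stdAddChar (g i * k)‖] using relation

variable {n N : ℕ} {w : ZMod N}

lemma two_pow_ne_three {i : ℕ} (hN : N = 2 ^ n + 3) (hi : i < n) : (2 : ZMod N) ^ i ≠ 3 := by
  have hlt : 2 ^ i < 2 ^ n := Nat.pow_lt_pow_right one_lt_two hi
  have hne : 2 ^ i ≠ 3 := by cases i <;> omega
  have hmod : ¬2 ^ i ≡ 3 [MOD N] := fun h ↦
    hne <| h.eq_of_lt_of_lt (by omega) (hN ▸ Nat.lt_add_of_pos_left (by positivity))
  exact_mod_cast (natCast_eq_natCast_iff _ _ N).not.2 hmod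

lemma two_pow_ne_neg_three {i : ℕ} (hN : N = 2 ^ n + 3) (hi : i < n) :
    (2 : ZMod N) ^ i ≠ -3 := by
  have hlt : 2 ^ i < 2 ^ n := Nat.pow_lt_pow_right one_lt_two hi
  have hdvd : ¬N ∣ 2 ^ i + 3 := Nat.not_dvd_of_pos_of_lt (by positivity) (by omega)
  rw [Ne, eq_neg_iff_add_eq_zero]
  exact_mod_cast (natCast_eq_zero_iff _ N).not.2 hdvd

lemma dissociatedOn_sign_mul_two_pow (hN : 2 ^ n ≤ N) (hw : IsUnit w) {ε : ℕ → ℤ}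
    (hε : ∀ i < n, ε i = 1 ∨ ε i = -1) :
    DissociatedOn (fun i ↦ (ε i : ZMod N) * w * 2 ^ i) (range n) := by
  refine ((dissociatedOn_two_pow hN).map (φ := AddMonoidHom.mulLeft w)
    hw.mul_right_injective).of_eq_or_eq_neg fun i hi ↦ ?_
  rcases hε i (mem_range.1 hi) with h | h <;> simp [h]

variable [NeZero N] {ι : Type*} {g : ι → ZMod N} {A : Finset ι}

lemma DissociatedOn.exists_two_pow_mul_eq_or_eq_neg {c : ZMod N} (hN : N = 2 ^ n + 3)
    (hg : DissociatedOn g A) (hw : -w ≠ w) (hmiss : (subsetSums g A)ᶜ = {c, c + w, c - w})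
    (h2 : Odd N) (h3 : N.Coprime 3) {i : ℕ} (hi : i < n) :
    ∃ a ∈ A, g a = 2 ^ i * w ∨ g a = -(2 ^ i * w) := by
  have unit_w : IsUnit w := hg.isUnit_of_compl_subsetSums_eq hw hmiss h2 h3
  have not_three_mul {i : ℕ} (hi : i < n) : 2 ^ i * w ≠ 3 * w ∧ 2 ^ i * w ≠ -(3 * w) := by
    rw [← neg_mul, Ne, Ne, unit_w.mul_left_inj, unit_w.mul_left_inj]
    exact ⟨two_pow_ne_three hN hi, two_pow_ne_neg_three hN hi⟩
  have closed := hg.exists_elim_eq_or_eq_neg hw hmiss h2 h3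
  simp only [Option.forall, Option.exists, Option.elim_none, Option.elim_some, Subtype.forall,
    Subtype.exists, exists_prop] at closed
  obtain ⟨closed_w, closed_two_mul⟩ := closed
  induction i with
  | zero =>
    obtain ⟨ne_three_w, ne_neg_three_w⟩ := not_three_mul hi
    rw [pow_zero, one_mul] at ne_three_w ne_neg_three_w ⊢
    obtain ⟨a, ha, hwa⟩ := closed_w.resolve_left (not_or.2 ⟨ne_three_w, ne_neg_three_w⟩)
    exact ⟨a, ha, hwa.imp Eq.symm fun h ↦ by rw [h, neg_neg]⟩
  | succ i ih =>
    obtain ⟨b, hb, hgb⟩ := ih (by omega)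
    have two_mul_gb : 2 * g b = 2 ^ (i + 1) * w ∨ 2 * g b = -(2 ^ (i + 1) * w) :=
      hgb.imp (fun h ↦ by rw [h]; ring) fun h ↦ by rw [h]; ring
    obtain ⟨ne_three_w, ne_neg_three_w⟩ := not_three_mul hi
    obtain ⟨a, ha, hab⟩ : ∃ a ∈ A, 2 * g b = g a ∨ 2 * g b = -g a :=
      (closed_two_mul b hb).resolve_left (by grind only)
    exact ⟨a, ha, by grind only⟩

lemma DissociatedOn.exists_image_eq_sign_mul_two_pow (hg : DissociatedOn g A) (hn : 1 ≤ n)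
    (hN : N = 2 ^ n + 3) (hcard : #A = n) :
    ∃ w : ZMod N, IsUnit w ∧ ∃ ε : ℕ → ℤ, (∀ i < n, ε i = 1 ∨ ε i = -1) ∧
      A.image g = (range n).image fun i ↦ (ε i : ZMod N) * w * 2 ^ i := by
  have h2 : Odd N := hN ▸ (even_two.pow_of_ne_zero (by omega)).add_odd (by decide)
  have h3 : N.Coprime 3 := by
    rw [hN, Nat.coprime_add_self_left]
    exact Nat.Coprime.pow_left n (by norm_num)
  obtain ⟨c, w, hw, hmiss⟩ := hg.exists_compl_subsetSums_eq (by rw [ZMod.card, hcard, hN])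
    (by rwa [Nat.card_zmod])
  have unit_w : IsUnit w := hg.isUnit_of_compl_subsetSums_eq hw hmiss h2 h3
  have signed (i : ℕ) : ∃ s : ℤ, (s = 1 ∨ s = -1) ∧
      (i < n → (s : ZMod N) * w * 2 ^ i ∈ A.image g) := by
    by_cases hi : i < n
    · obtain ⟨a, ha, hga | hga⟩ := hg.exists_two_pow_mul_eq_or_eq_neg hN hw hmiss h2 h3 hi
      · exact ⟨1, Or.inl rfl, fun _ ↦ mem_image.2 ⟨a, ha, by rw [hga]; push_cast; ring⟩⟩
      · exact ⟨-1, Or.inr rfl, fun _ ↦ mem_image.2 ⟨a, ha, by rw [hga]; push_cast; ring⟩⟩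
    · exact ⟨1, Or.inl rfl, fun h ↦ absurd h hi⟩
  choose ε hε hmem using signed
  refine ⟨w, unit_w, ε, fun i _ ↦ hε i, (eq_of_subset_of_card_le ?_ ?_).symm⟩
  · exact image_subset_iff.2 fun i hi ↦ hmem i (mem_range.1 hi)
  · have hinj := (dissociatedOn_sign_mul_two_pow (n := n) (by omega) unit_w fun i _ ↦ hε i).injOn
    rw [card_image_of_injOn hinj, card_range, ← hcard]
    exact card_image_le

end PowersOfTwo

theorem stmt5_general {n N : ℕ} (hn : 1 ≤ n) (hN : N = 2 ^ n + 3) {ι : Type*} {g : ι → ZMod N}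
    {A : Finset ι} (hcard : #A = n) :
    DissociatedOn g A ↔
      ∃ lam : ℤ, Int.gcd lam N = 1 ∧ ∃ ε : ℕ → ℤ, (∀ i < n, ε i = 1 ∨ ε i = -1) ∧
        A.image g = (range n).image fun i ↦ (ε i : ZMod N) * (lam : ZMod N) * 2 ^ i := by
  have : NeZero N := ⟨hN ▸ Nat.succ_ne_zero _⟩
  have isUnit_iff (lam : ℤ) : IsUnit (lam : ZMod N) ↔ Int.gcd lam N = 1 := by
    rw [coe_int_isUnit_iff_isCoprime, isCoprime_comm, Int.isCoprime_iff_gcd_eq_one]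
  constructor
  · intro hg
    obtain ⟨w, hw, ε, hε, himage⟩ := hg.exists_image_eq_sign_mul_two_pow hn hN hcard
    obtain ⟨lam, rfl⟩ := intCast_surjective w
    exact ⟨lam, (isUnit_iff lam).1 hw, ε, hε, himage⟩
  · rintro ⟨lam, hlam, ε, hε, himage⟩
    have hpow := dissociatedOn_sign_mul_two_pow (hN ▸ Nat.le_add_right _ 3)
      ((isUnit_iff lam).2 hlam) hε
    exact hpow.of_image_eq himage (by rw [hcard, card_range])

theorem stmt5 (n : ℕ) (hn : 1 ≤ n) (N : ℕ) (hN : N = 2 ^ n + 3)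
    (A : Finset ℕ) (hpos : ∀ a ∈ A, 0 < a) (hcard : A.card = n) :
    SumsetDistinctMod N A ↔
      ∃ lam : ℤ, Int.gcd lam N = 1 ∧ ∃ ε : ℕ → ℤ, (∀ i < n, ε i = 1 ∨ ε i = -1) ∧
        A.image (fun a : ℕ => (a : ZMod N)) =
          (Finset.range n).image (fun i => (ε i : ZMod N) * (lam : ZMod N) * 2 ^ i) :=
  sumsetDistinctMod_iff.trans (stmt5_general hn hN hcard)
end

section
/- Let n ≥ 1 and N = 2^n + 1. The number of n-element subsets of {1, 2, …, N-1} that are sumset-distinct modulo N is exactly 2^n · φ(N) / (2n), where φ is Euler's totient function. -/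
/-!
Work in an abelian group `G` of order `2 ^ n + 1`. The `2 ^ n` subset sums of a dissociated
`n`-set `A` miss exactly one element `m`. For `a ∈ A` let `T` be the set of subset sums of
`A \ {a}`, so that `T ⊔ (a + T) = {m}ᶜ`. This forces `a` to generate `G` and `T` to be an
arithmetic progression of length `2 ^ (n - 1)` and difference `2a`. For another `b ∈ A` we have
`T = U ⊔ (b + U)` with `U` the set of subset sums of `A \ {a, b}`, and a progression splits this
way only if `b = ± e(2a)` with `2e ∣ 2 ^ (n - 1)`, which gives
`b = ± 2 ^ j a` with `j < n`. Hence for `u ∈ A ∪ -A` the set `A` picks one of `± 2 ^ j u` for each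
`j < n`; conversely, every such choice for a generator `u` is dissociated. Now count the pairs
`(A, u)` with `u ∈ A ∪ -A`: there are `2n` for each `A` and `2 ^ n` for each generator `u`.
-/

section

open Finset
open scoped Pointwise symmDiff

/-- `S` is the disjoint union of `T` and its translate by `a`. -/
structure IsTwoTiling {M : Type*} [Add M] [DecidableEq M] (a : M) (T S : Finset M) : Prop where
  disjoint : Disjoint T (a +ᵥ T)
  union_eq : T ∪ (a +ᵥ T) = S

/-- The `m` terms `g, g + d, …, g + (m - 1)d` of an arithmetic progression. -/
def arithProg {M : Type*} [AddMonoid M] [DecidableEq M] (g d : M) (m : ℕ) : Finset M :=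
  (range m).image fun k ↦ g + k • d

/-- The set `{± 2 ^ j • u | j < n}`, where `J` is the set of exponents that carry a minus sign. -/
def signedDoublings {G : Type*} [AddCommGroup G] [DecidableEq G] (n : ℕ) (u : G)
    (J : Finset ℕ) : Finset G :=
  (range n).image (J.piecewise (-fun j ↦ 2 ^ j • u) fun j ↦ 2 ^ j • u)

/-- The generating function of `range m` is divisible by `1 + X ^ e`, which vanishes at a primitive
`2 * e`-th root of unity. -/
lemma two_mul_dvd_of_isTwoTiling_range {e m : ℕ} {V : Finset ℕ} (he : e ≠ 0)
    (h : IsTwoTiling e V (range m)) : 2 * e ∣ m := by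
  obtain ⟨ζ, hζ⟩ : ∃ ζ : ℂ, IsPrimitiveRoot ζ (2 * e) :=
    ⟨_, Complex.isPrimitiveRoot_exp _ (by positivity)⟩
  have hζe : ζ ^ e = -1 :=
    (hζ.pow (by positivity) (mul_comm 2 e)).eq_neg_one_of_two_right
  have hsum : ∑ k ∈ range m, ζ ^ k = 0 := by
    rw [← h.union_eq, sum_union h.disjoint, vadd_finset_def, sum_image (by simp)]
    simp [pow_add, hζe]
  have hm := mul_neg_geom_sum ζ m
  rw [hsum, mul_zero] at hm
  exact hζ.dvd_of_pow_eq_one m (sub_eq_zero.mp hm.symm).symm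

variable {G : Type*} [AddCommGroup G]

lemma zero_notMem_of_addDissociated {s : Set G} (hs : AddDissociated s) : (0 : G) ∉ s := fun h ↦
  addDissociated_singleton.mp (hs.subset (Set.singleton_subset_iff.mpr h)) rfl

lemma odd_two_pow_add_one {n : ℕ} (hn : n ≠ 0) : Odd (2 ^ n + 1) :=
  (even_two.pow_of_ne_zero hn).add_one

lemma eq_zero_of_neg_eq_self_s6 (hG : Odd (Nat.card G)) {a : G} (ha : -a = a) : a = 0 := by
  have h2 : addOrderOf a ∣ 2 := addOrderOf_dvd_of_nsmul_eq_zero (by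
    rw [two_nsmul, ← neg_eq_iff_add_eq_zero, ha])
  rw [← AddMonoid.addOrderOf_eq_one_iff]
  exact Nat.eq_one_of_dvd_coprimes hG.coprime_two_left h2 (addOrderOf_dvd_natCard a)

lemma neg_notMem_of_addDissociated (hG : Odd (Nat.card G)) {s : Set G} (hs : AddDissociated s)
    {a : G} (ha : a ∈ s) : -a ∉ s := by
  classical
  intro hna
  have hne : a ≠ -a := fun h ↦ zero_notMem_of_addDissociated hs
    (eq_zero_of_neg_eq_self_s6 hG h.symm ▸ ha)
  have hpair : ({a, -a} : Finset G) = ∅ :=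
    hs (by simp [Set.insert_subset_iff, ha, hna]) (by simp) (by simp [sum_pair hne])
  exact insert_ne_empty _ _ hpair

lemma exists_nsmul_eq_of_addOrderOf_eq_card [Finite G] {d : G} (hd : addOrderOf d = Nat.card G)
    (x : G) : ∃ k < Nat.card G, k • d = x := by
  classical
  have htop : AddSubgroup.zmultiples d = ⊤ :=
    AddSubgroup.eq_top_of_card_eq _ ((Nat.card_zmultiples d).trans hd)
  have hx : x ∈ AddSubgroup.zmultiples d := htop ▸ AddSubgroup.mem_top x
  rw [← hd]
  simpa using mem_zmultiples_iff_mem_range_addOrderOf.1 hx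

lemma exists_nsmul_eq_or_neg_of_addOrderOf_eq_card {d : G} {m : ℕ} (hG : Nat.card G = 2 * m + 1)
    (hd : addOrderOf d = Nat.card G) (x : G) : ∃ e ≤ m, x = e • d ∨ x = -(e • d) := by
  have : Finite G := Nat.finite_of_card_ne_zero (by omega)
  obtain ⟨k, hk, rfl⟩ := exists_nsmul_eq_of_addOrderOf_eq_card hd x
  rcases le_or_gt k m with hkm | hkm
  · exact ⟨k, hkm, .inl rfl⟩
  · refine ⟨Nat.card G - k, by omega, .inr ?_⟩
    rw [eq_neg_iff_add_eq_zero, ← add_nsmul, Nat.add_sub_cancel' hk.le, card_nsmul_eq_zero']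

lemma sum_piecewise_neg {ι : Type*} [DecidableEq ι] (f : ι → G) (J K : Finset ι) :
    ∑ i ∈ K, J.piecewise (-f) f i = ∑ i ∈ K ∆ J, f i - ∑ i ∈ J, f i := by
  have hsymm : ∑ i ∈ K ∆ J, f i = ∑ i ∈ K \ J, f i + ∑ i ∈ J \ K, f i :=
    sum_union disjoint_sdiff_sdiff
  rw [sum_piecewise, hsymm, ← sum_inter_add_sum_sdiff J K f, inter_comm K J]
  simp only [Pi.neg_apply, sum_neg_distrib]
  abel

lemma injOn_sum_piecewise_neg {ι : Type*} [DecidableEq ι] {f : ι → G} {s J : Finset ι}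
    (hJ : J ⊆ s) (hf : Set.InjOn (fun K ↦ ∑ i ∈ K, f i) {K | K ⊆ s}) :
    Set.InjOn (fun K ↦ ∑ i ∈ K, J.piecewise (-f) f i) {K | K ⊆ s} := by
  intro K hK L hL h
  simp only [sum_piecewise_neg, sub_left_inj] at h
  exact symmDiff_left_injective J (hf (symmDiff_subset_union.trans (union_subset hK hJ))
    (symmDiff_subset_union.trans (union_subset hL hJ)) h)

lemma injOn_of_injOn_sum {ι M : Type*} [AddCommMonoid M] {f : ι → M} {s : Finset ι}
    (hf : Set.InjOn (fun K ↦ ∑ i ∈ K, f i) {K | K ⊆ s}) :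
    Set.InjOn f s := fun _ hi _ hj h ↦
  singleton_injective
    (hf (singleton_subset_iff.2 hi) (singleton_subset_iff.2 hj) (by simpa using h))

lemma addDissociated_image [DecidableEq G] {ι : Type*} {f : ι → G} {s : Finset ι}
    (hf : Set.InjOn (fun K ↦ ∑ i ∈ K, f i) {K | K ⊆ s}) :
    AddDissociated (s.image f : Set G) := by
  intro B hB C hC h
  obtain ⟨K, hK, rfl⟩ := subset_image_iff.1 (coe_subset.1 hB)
  obtain ⟨L, hL, rfl⟩ := subset_image_iff.1 (coe_subset.1 hC)
  simp only [sum_image ((injOn_of_injOn_sum hf).mono (coe_subset.2 hK)),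
    sum_image ((injOn_of_injOn_sum hf).mono (coe_subset.2 hL))] at h
  rw [hf hK hL h]

lemma injOn_sum_two_pow_nsmul {n : ℕ} {u : G} (hu : 2 ^ n ≤ addOrderOf u) :
    Set.InjOn (fun K ↦ ∑ j ∈ K, 2 ^ j • u) {K | K ⊆ range n} := by
  have hlt : ∀ K ⊆ range n, ∑ j ∈ K, 2 ^ j < addOrderOf u := fun K hK ↦
    (Nat.geomSum_lt le_rfl fun j hj ↦ mem_range.1 (hK hj)).trans_le hu
  intro K hK L hL h
  simp only [sum_nsmul_assoc] at h
  exact geomSum_injective le_rfl (nsmul_injOn_Iio_addOrderOf (hlt K hK) (hlt L hL) h)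

variable [DecidableEq G]

lemma addDissociated_signedDoublings {n : ℕ} {u : G} (hu : 2 ^ n ≤ addOrderOf u) {J : Finset ℕ}
    (hJ : J ⊆ range n) : AddDissociated (signedDoublings n u J : Set G) :=
  addDissociated_image (injOn_sum_piecewise_neg hJ (injOn_sum_two_pow_nsmul hu))

lemma card_signedDoublings {n : ℕ} {u : G} (hu : 2 ^ n ≤ addOrderOf u) {J : Finset ℕ}
    (hJ : J ⊆ range n) : #(signedDoublings n u J) = n := by
  rw [signedDoublings, card_image_of_injOn, card_range]
  exact injOn_of_injOn_sum (injOn_sum_piecewise_neg hJ (injOn_sum_two_pow_nsmul hu))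

lemma neg_two_pow_nsmul_mem_signedDoublings_iff {n j : ℕ} {u : G} (hG : Odd (Nat.card G))
    (hu : 2 ^ n ≤ addOrderOf u) {J : Finset ℕ} (hJ : J ⊆ range n) (hj : j < n) :
    -(2 ^ j • u) ∈ signedDoublings n u J ↔ j ∈ J := by
  have hmem : J.piecewise (-fun j ↦ 2 ^ j • u) (fun j ↦ 2 ^ j • u) j ∈ signedDoublings n u J :=
    mem_image_of_mem _ (mem_range.2 hj)
  by_cases hjJ : j ∈ J
  · simpa [hjJ] using hmem
  · simp only [hjJ, not_false_eq_true, piecewise_eq_of_notMem, iff_false] at hmem ⊢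
    exact neg_notMem_of_addDissociated hG (addDissociated_signedDoublings hu hJ) hmem

lemma injOn_signedDoublings {n : ℕ} {u : G} (hG : Odd (Nat.card G)) (hu : 2 ^ n ≤ addOrderOf u) :
    Set.InjOn (signedDoublings n u) {K | K ⊆ range n} := by
  intro J hJ J' hJ' h
  ext j
  by_cases hj : j < n
  · rw [← neg_two_pow_nsmul_mem_signedDoublings_iff hG hu hJ hj, h,
      neg_two_pow_nsmul_mem_signedDoublings_iff hG hu hJ' hj]
  · exact iff_of_false (fun h ↦ hj (mem_range.1 (hJ h))) (fun h ↦ hj (mem_range.1 (hJ' h)))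

lemma add_nsmul_mem_arithProg_iff {g d : G} {k m : ℕ} (hk : k < addOrderOf d)
    (hm : m ≤ addOrderOf d) : g + k • d ∈ arithProg g d m ↔ k < m := by
  refine ⟨fun h ↦ ?_, fun h ↦ mem_image_of_mem _ (mem_range.2 h)⟩
  obtain ⟨i, hi, hik⟩ := mem_image.1 h
  have him := mem_range.1 hi
  rwa [← nsmul_injOn_Iio_addOrderOf (him.trans_le hm) hk (add_left_cancel hik)]

lemma card_union_neg (hG : Odd (Nat.card G)) {A : Finset G} (hA : AddDissociated (A : Set G)) :
    #(A ∪ -A) = 2 * #A := by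
  have hdisj : Disjoint A (-A) := disjoint_left.2 fun a ha hna ↦
    neg_notMem_of_addDissociated hG hA ha (mem_neg'.1 hna)
  rw [card_union_of_disjoint hdisj, card_neg, two_mul]

lemma card_subsetSum {A : Finset G} (hA : AddDissociated (A : Set G)) :
    #A.subsetSum = 2 ^ #A := by
  rw [subsetSum, card_image_of_injOn, card_powerset]
  exact hA.mono fun B hB ↦ coe_subset.2 (mem_powerset.1 hB)

lemma isTwoTiling_subsetSum {A : Finset G} (hA : AddDissociated (A : Set G)) {a : G}
    (ha : a ∈ A) : IsTwoTiling a (A.erase a).subsetSum A.subsetSum where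
  disjoint := by
    rw [disjoint_left]
    intro y hy hay
    obtain ⟨B, hB, rfl⟩ := mem_subsetSum_iff.1 hy
    obtain ⟨z, hz, hCB⟩ := mem_vadd_finset.1 hay
    obtain ⟨C, hC, rfl⟩ := mem_subsetSum_iff.1 hz
    rw [subset_erase] at hB hC
    have hBC : insert a C = B := hA (by simpa using insert_subset ha hC.1) (by simpa using hB.1)
      (by simpa [sum_insert hC.2] using hCB)
    exact hB.2 (hBC ▸ mem_insert_self a C)
  union_eq := by
    obtain ⟨B, haB, rfl⟩ : ∃ B, a ∉ B ∧ insert a B = A :=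
      ⟨A.erase a, notMem_erase a A, insert_erase ha⟩
    have hinsert : (B.powerset.image (insert a)).image (fun C ↦ C.sum id) =
        a +ᵥ B.subsetSum := by
      rw [subsetSum, vadd_finset_def, image_image, image_image]
      refine image_congr fun C hC ↦ ?_
      have haC : a ∉ C := fun h ↦ haB (mem_powerset.1 hC h)
      simp [sum_insert haC]
    rw [erase_insert haB, subsetSum.eq_1 (insert a B), powerset_insert, image_union, hinsert,
      subsetSum]

lemma exists_subsetSum_eq_compl_singleton [Fintype G] {A : Finset G}
    (hG : Nat.card G = 2 ^ #A + 1) (hA : AddDissociated (A : Set G)) :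
    ∃ m, A.subsetSum = {m}ᶜ := by
  obtain ⟨m, hm⟩ : ∃ m, A.subsetSumᶜ = {m} := card_eq_one.1 (by
    rw [card_compl, card_subsetSum hA, ← Nat.card_eq_fintype_card, hG, Nat.add_sub_cancel_left])
  exact ⟨m, by rw [← hm, compl_compl]⟩

namespace IsTwoTiling

variable {a : G} {S T : Finset G}

lemma subset (h : IsTwoTiling a T S) : T ⊆ S :=
  h.union_eq ▸ subset_union_left

lemma vadd_subset (h : IsTwoTiling a T S) : a +ᵥ T ⊆ S :=
  h.union_eq ▸ subset_union_right

lemma neg (h : IsTwoTiling a T S) : IsTwoTiling (-a) (a +ᵥ T) S where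
  disjoint := by rw [neg_vadd_vadd]; exact h.disjoint.symm
  union_eq := by rw [neg_vadd_vadd, union_comm, h.union_eq]

lemma add_mem_iff (h : IsTwoTiling a T S) {y : G} (hy : a + y ∈ S) : a + y ∈ T ↔ y ∉ T := by
  have hvadd : a + y ∈ a +ᵥ T ↔ y ∈ T := vadd_mem_vadd_finset_iff a
  have hdisj : ¬(a + y ∈ T ∧ a + y ∈ a +ᵥ T) := fun hT ↦ disjoint_left.1 h.disjoint hT.1 hT.2
  rw [← h.union_eq, mem_union] at hy
  tauto

lemma nsmul_add_mem_iff [Fintype G] {m : G} (h : IsTwoTiling a T {m}ᶜ) {y : G} :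
    ∀ {k : ℕ}, (∀ i < k, (i + 1) • a + y ≠ m) → (k • a + y ∈ T ↔ (Even k ↔ y ∈ T))
  | 0, _ => by simp
  | k + 1, hy => by
    have hstep : (k + 1) • a + y = a + (k • a + y) := by rw [succ_nsmul', add_assoc]
    have hS : a + (k • a + y) ∈ ({m}ᶜ : Finset G) := by simpa [hstep] using hy k k.lt_succ_self
    rw [hstep, h.add_mem_iff hS, nsmul_add_mem_iff h fun i hi ↦ hy i (by omega), Nat.even_add_one]
    tauto

/-- On a coset of `⟨a⟩` that avoids `m`, membership in `T` alternates along the steps by `a`, which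
is impossible around a cycle of odd length. So there is no such coset. -/
lemma addOrderOf_eq_card [Fintype G] {m : G} (hG : Odd (Nat.card G)) (h : IsTwoTiling a T {m}ᶜ) :
    addOrderOf a = Nat.card G := by
  refine addOrderOf_eq_card_of_forall_mem_zmultiples fun x ↦ ?_
  by_contra hx
  have havoid (i : ℕ) : (i + 1) • a + (x + m) ≠ m := fun hi ↦ by
    rw [← add_assoc, add_eq_right, add_eq_zero_iff_neg_eq] at hi
    exact hx (hi ▸ neg_mem (AddSubgroup.nsmul_mem_zmultiples a _))
  have hcycle := h.nsmul_add_mem_iff (k := addOrderOf a) fun i _ ↦ havoid i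
  have hodd : ¬Even (addOrderOf a) :=
    Nat.not_even_iff_odd.2 (hG.of_dvd_nat (addOrderOf_dvd_natCard a))
  rw [addOrderOf_nsmul_eq_zero, zero_add] at hcycle
  tauto

lemma nsmul_add_mem_iff_odd [Fintype G] {m : G} (h : IsTwoTiling a T {m}ᶜ) {k : ℕ}
    (hk : k < addOrderOf a) : k • a + m ∈ T ↔ Odd k := by
  have hm : m ∉ T := fun hm ↦ by simpa using h.subset hm
  have havoid : ∀ i < k, (i + 1) • a + m ≠ m := fun i hi ↦ by
    rw [ne_eq, add_eq_right]
    exact nsmul_ne_zero_of_lt_addOrderOf i.succ_ne_zero (by omega)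
  rw [h.nsmul_add_mem_iff havoid, ← Nat.not_even_iff_odd]
  tauto

lemma eq_arithProg [Fintype G] {m : G} {r : ℕ} (hG : Nat.card G = 2 * r + 1)
    (h : IsTwoTiling a T {m}ᶜ) : T = arithProg (a + m) (2 • a) r := by
  have horder : addOrderOf a = Nat.card G := h.addOrderOf_eq_card ⟨r, hG⟩
  have hterm (i : ℕ) : a + m + i • 2 • a = (2 * i + 1) • a + m := by
    rw [add_nsmul a (2 * i) 1, one_nsmul, mul_nsmul]; abel
  ext y
  simp only [arithProg, mem_image, mem_range, hterm]
  constructor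
  · intro hy
    obtain ⟨k, hk, hky⟩ := exists_nsmul_eq_of_addOrderOf_eq_card horder (y - m)
    obtain rfl : k • a + m = y := by rw [hky, sub_add_cancel]
    obtain ⟨i, rfl⟩ := (h.nsmul_add_mem_iff_odd (horder ▸ hk)).1 hy
    exact ⟨i, by omega, rfl⟩
  · rintro ⟨i, hi, rfl⟩
    exact (h.nsmul_add_mem_iff_odd (by omega)).2 ⟨i, rfl⟩

lemma isTwoTiling_filter_range {g d : G} {e m : ℕ} (hd : 2 * m ≤ addOrderOf d) (hem : e ≤ m)
    (h : IsTwoTiling (e • d) T (arithProg g d m)) :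
    IsTwoTiling e {k ∈ range m | g + k • d ∈ T} (range m) where
  disjoint := by
    rw [disjoint_left]
    intro k hk hke
    obtain ⟨i, hi, rfl⟩ := mem_vadd_finset.1 hke
    refine disjoint_left.1 h.disjoint (mem_filter.1 hk).2 (mem_vadd_finset.2
      ⟨_, (mem_filter.1 hi).2, ?_⟩)
    simp only [vadd_eq_add, add_nsmul]
    abel
  union_eq := by
    have hshift (k : ℕ) : e • d + (g + k • d) = g + (e + k) • d := by rw [add_nsmul]; abel
    ext k
    rw [mem_union, mem_range]
    constructor
    · rintro (hk | hk)
      · exact mem_range.1 (mem_filter.1 hk).1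
      · obtain ⟨i, hi, rfl⟩ := mem_vadd_finset.1 hk
        rw [mem_filter, mem_range] at hi
        have hiS := h.vadd_subset (vadd_mem_vadd_finset hi.2)
        rwa [vadd_eq_add, hshift, add_nsmul_mem_arithProg_iff (by omega) (by omega)] at hiS
    · intro hk
      have hkS : g + k • d ∈ arithProg g d m :=
        (add_nsmul_mem_arithProg_iff (by omega) (by omega)).2 hk
      rw [← h.union_eq, mem_union] at hkS
      refine hkS.imp (fun hkT ↦ mem_filter.2 ⟨mem_range.2 hk, hkT⟩) fun hkT ↦ ?_
      obtain ⟨t, ht, htk⟩ := mem_vadd_finset.1 hkT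
      obtain ⟨i, hi, rfl⟩ := mem_image.1 (h.subset ht)
      rw [mem_range] at hi
      rw [vadd_eq_add, hshift] at htk
      have hik : e + i = k := nsmul_injOn_Iio_addOrderOf (Set.mem_Iio.2 (by omega))
        (Set.mem_Iio.2 (by omega)) (add_left_cancel htk)
      exact mem_vadd_finset.2 ⟨i, mem_filter.2 ⟨mem_range.2 hi, ht⟩, hik⟩

lemma exists_eq_two_pow_nsmul [Fintype G] {b : G} {U : Finset G} {m : G} {n : ℕ}
    (hG : Nat.card G = 2 ^ (n + 1) + 1) (hb : b ≠ 0) (hT : IsTwoTiling a T {m}ᶜ)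
    (hU : IsTwoTiling b U T) : ∃ j ≤ n, b = 2 ^ j • a ∨ b = -(2 ^ j • a) := by
  replace hG : Nat.card G = 2 * 2 ^ n + 1 := by rw [hG, pow_succ']
  have horder : addOrderOf (2 • a) = Nat.card G := by
    have ha := hT.addOrderOf_eq_card ⟨2 ^ n, hG⟩
    rw [Nat.Coprime.addOrderOf_nsmul, ha]
    rw [ha, hG]
    simp
  rw [hT.eq_arithProg hG] at hU
  obtain ⟨e, hem, hbe⟩ := exists_nsmul_eq_or_neg_of_addOrderOf_eq_card hG horder b
  have he : e ≠ 0 := by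
    rintro rfl
    simp [hb] at hbe
  obtain ⟨W, hW⟩ : ∃ W, IsTwoTiling (e • 2 • a) W (arithProg (a + m) (2 • a) (2 ^ n)) := by
    rcases hbe with rfl | rfl
    · exact ⟨U, hU⟩
    · exact ⟨_, neg_neg (e • 2 • a) ▸ hU.neg⟩
  have hdvd : 2 * e ∣ 2 ^ n :=
    two_mul_dvd_of_isTwoTiling_range he (hW.isTwoTiling_filter_range (by omega) hem)
  obtain ⟨j, hj, hje⟩ := (Nat.dvd_prime_pow Nat.prime_two).1 hdvd
  refine ⟨j, hj, ?_⟩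
  rwa [← hje, mul_nsmul]

end IsTwoTiling

variable {A : Finset G}

omit [DecidableEq G] in
lemma addOrderOf_eq_card_of_mem_addDissociated {a : G} (hG : Nat.card G = 2 ^ #A + 1)
    (hA : AddDissociated (A : Set G)) (ha : a ∈ A) : addOrderOf a = Nat.card G := by
  classical
  have : Finite G := Nat.finite_of_card_ne_zero (hG.trans_ne (Nat.succ_ne_zero _))
  have := Fintype.ofFinite G
  obtain ⟨m, hm⟩ := exists_subsetSum_eq_compl_singleton hG hA
  exact (hm ▸ isTwoTiling_subsetSum hA ha).addOrderOf_eq_card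
    (hG ▸ odd_two_pow_add_one (card_ne_zero_of_mem ha))

lemma addOrderOf_eq_card_of_mem_union_neg {u : G} (hG : Nat.card G = 2 ^ #A + 1)
    (hA : AddDissociated (A : Set G)) (hu : u ∈ A ∪ -A) : addOrderOf u = Nat.card G := by
  rw [mem_union, mem_neg'] at hu
  rcases hu with hu | hu
  · exact addOrderOf_eq_card_of_mem_addDissociated hG hA hu
  · rw [← addOrderOf_neg, addOrderOf_eq_card_of_mem_addDissociated hG hA hu]

omit [DecidableEq G] in
lemma exists_eq_two_pow_nsmul_of_mem {a b : G} (hG : Nat.card G = 2 ^ #A + 1)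
    (hA : AddDissociated (A : Set G)) (ha : a ∈ A) (hb : b ∈ A) :
    ∃ j < #A, b = 2 ^ j • a ∨ b = -(2 ^ j • a) := by
  classical
  have : Finite G := Nat.finite_of_card_ne_zero (hG.trans_ne (Nat.succ_ne_zero _))
  have := Fintype.ofFinite G
  have hpos : 0 < #A := card_pos.2 ⟨a, ha⟩
  obtain rfl | hba := eq_or_ne b a
  · exact ⟨0, hpos, .inl (by simp)⟩
  obtain ⟨m, hm⟩ := exists_subsetSum_eq_compl_singleton hG hA
  have hb0 : b ≠ 0 := fun h ↦ zero_notMem_of_addDissociated hA (h ▸ hb)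
  have hA' : AddDissociated (A.erase a : Set G) := hA.subset (by simp)
  obtain ⟨j, hj, hbj⟩ := IsTwoTiling.exists_eq_two_pow_nsmul (n := #A - 1)
    (by rwa [Nat.sub_add_cancel hpos]) hb0 (hm ▸ isTwoTiling_subsetSum hA ha)
    (isTwoTiling_subsetSum hA' (mem_erase.2 ⟨hba, hb⟩))
  exact ⟨j, by omega, hbj⟩

lemma exists_eq_two_pow_nsmul_of_mem_union_neg {u b : G} (hG : Nat.card G = 2 ^ #A + 1)
    (hA : AddDissociated (A : Set G)) (hu : u ∈ A ∪ -A) (hb : b ∈ A) :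
    ∃ j < #A, b = 2 ^ j • u ∨ b = -(2 ^ j • u) := by
  rw [mem_union, mem_neg'] at hu
  rcases hu with hu | hu
  · exact exists_eq_two_pow_nsmul_of_mem hG hA hu hb
  · simpa [or_comm] using exists_eq_two_pow_nsmul_of_mem hG hA hu hb

lemma exists_signedDoublings_eq {u : G} (hG : Nat.card G = 2 ^ #A + 1)
    (hA : AddDissociated (A : Set G)) (hu : u ∈ A ∪ -A) :
    ∃ J ⊆ range #A, signedDoublings #A u J = A := by
  refine ⟨{j ∈ range #A | -(2 ^ j • u) ∈ A}, filter_subset _ _, Eq.symm ?_⟩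
  refine eq_of_subset_of_card_le (fun b hb ↦ ?_) (card_image_le.trans (card_range _).le)
  obtain ⟨j, hj, rfl | rfl⟩ := exists_eq_two_pow_nsmul_of_mem_union_neg hG hA hu hb <;>
    refine mem_image.2 ⟨j, mem_range.2 hj, ?_⟩
  · have hneg : -(2 ^ j • u) ∉ A :=
      neg_notMem_of_addDissociated (hG ▸ odd_two_pow_add_one (card_ne_zero_of_mem hb)) hA hb
    simp [hneg]
  · simp [hb, hj]

lemma mem_union_neg_signedDoublings {n : ℕ} (hn : 1 ≤ n) (u : G) (J : Finset ℕ) :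
    u ∈ signedDoublings n u J ∪ -signedDoublings n u J := by
  have h0 : J.piecewise (-fun j ↦ 2 ^ j • u) (fun j ↦ 2 ^ j • u) 0 ∈ signedDoublings n u J :=
    mem_image_of_mem _ (mem_range.2 hn)
  rw [mem_union, mem_neg']
  by_cases hJ : 0 ∈ J
  · right; simpa [hJ] using h0
  · left; simpa [hJ] using h0

lemma ncard_addDissociated_mem_union_neg {n : ℕ} {u : G} (hn : 1 ≤ n)
    (hG : Nat.card G = 2 ^ n + 1) (hu : addOrderOf u = Nat.card G) :
    {A : Finset G | (#A = n ∧ AddDissociated (A : Set G)) ∧ u ∈ A ∪ -A}.ncard = 2 ^ n := by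
  have hodd : Odd (Nat.card G) := hG ▸ odd_two_pow_add_one (by omega)
  have hle : 2 ^ n ≤ addOrderOf u := by omega
  have himage : {A : Finset G | (#A = n ∧ AddDissociated (A : Set G)) ∧ u ∈ A ∪ -A} =
      signedDoublings n u '' ((range n).powerset : Set (Finset ℕ)) := by
    ext A
    constructor
    · rintro ⟨⟨rfl, hA⟩, huA⟩
      obtain ⟨J, hJ, hJA⟩ := exists_signedDoublings_eq hG hA huA
      exact ⟨J, mem_coe.2 (mem_powerset.2 hJ), hJA⟩
    · rintro ⟨J, hJ, rfl⟩
      rw [mem_coe, mem_powerset] at hJ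
      exact ⟨⟨card_signedDoublings hle hJ, addDissociated_signedDoublings hle hJ⟩,
        mem_union_neg_signedDoublings hn u J⟩
  have hinj : Set.InjOn (signedDoublings n u) ((range n).powerset : Set (Finset ℕ)) :=
    (injOn_signedDoublings hodd hle).mono fun J hJ ↦ mem_powerset.1 hJ
  rw [himage, hinj.ncard_image, Set.ncard_coe_finset, card_powerset, card_range]

end

section

open Finset
open scoped Pointwise

theorem stmt6_general {G : Type*} [AddCommGroup G] {n : ℕ} (hn : 1 ≤ n)
    (hG : Nat.card G = 2 ^ n + 1) :
    {A : Finset G | #A = n ∧ AddDissociated (A : Set G)}.ncard * (2 * n) =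
      2 ^ n * {u : G | addOrderOf u = Nat.card G}.ncard := by
  classical
  have : Finite G := Nat.finite_of_card_ne_zero (hG.trans_ne (Nat.succ_ne_zero _))
  have := Fintype.ofFinite G
  have hodd : Odd (Nat.card G) := hG ▸ odd_two_pow_add_one (by omega)
  simp only [Set.ncard_eq_toFinset_card', Set.toFinset_ofPred]
  rw [mul_comm (2 ^ n)]
  refine card_mul_eq_card_mul (fun A u ↦ u ∈ A ∪ -A) (fun A hA ↦ ?_) fun u hu ↦ ?_
  · obtain ⟨rfl, hAd⟩ := (mem_filter.1 hA).2
    rw [← card_union_neg hodd hAd]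
    congr 1
    ext u
    simpa [bipartiteAbove] using addOrderOf_eq_card_of_mem_union_neg hG hAd
  · rw [← ncard_addDissociated_mem_union_neg hn hG (mem_filter.1 hu).2,
      Set.ncard_eq_toFinset_card', Set.toFinset_ofPred, bipartiteBelow, filter_filter]

lemma sumsetDistinctMod_map_val_iff {N : ℕ} [NeZero N] {A : Finset (ZMod N)} :
    SumsetDistinctMod N (A.map ⟨ZMod.val, ZMod.val_injective N⟩) ↔
      AddDissociated (A : Set (ZMod N)) := by
  have hsum (B C : Finset (ZMod N)) :
      (∑ x ∈ B.map ⟨ZMod.val, ZMod.val_injective N⟩, x) % N =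
        (∑ x ∈ C.map ⟨ZMod.val, ZMod.val_injective N⟩, x) % N ↔ ∑ x ∈ B, x = ∑ x ∈ C, x := by
    rw [← ZMod.natCast_eq_natCast_iff']
    simp
  constructor
  · intro h B hB C hC hBC
    exact map_injective _ (h _ (map_subset_map.2 (coe_subset.1 hB)) _
      (map_subset_map.2 (coe_subset.1 hC)) ((hsum B C).2 hBC))
  · intro h B' hB' C' hC' hBC
    obtain ⟨B, hB, rfl⟩ := subset_map_iff.1 hB'
    obtain ⟨C, hC, rfl⟩ := subset_map_iff.1 hC'
    rw [h (coe_subset.2 hB) (coe_subset.2 hC) ((hsum B C).1 hBC)]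

lemma map_val_subset_Icc_iff {N : ℕ} [NeZero N] {A : Finset (ZMod N)} :
    A.map ⟨ZMod.val, ZMod.val_injective N⟩ ⊆ Icc 1 (N - 1) ↔ 0 ∉ A := by
  have hmem (x : ZMod N) : x.val ∈ Icc 1 (N - 1) ↔ x ≠ 0 := by
    have := x.val_lt
    rw [mem_Icc, ← (ZMod.val_ne_zero x)]
    omega
  simp only [subset_iff, forall_mem_map, Function.Embedding.coeFn_mk, hmem]
  exact ⟨fun h h0 ↦ h 0 h0 rfl, fun h x hx hx0 ↦ h (hx0 ▸ hx)⟩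

lemma ncard_sumsetDistinctMod (n N : ℕ) [NeZero N] :
    {A : Finset ℕ | A ⊆ Icc 1 (N - 1) ∧ #A = n ∧ SumsetDistinctMod N A}.ncard =
      {A : Finset (ZMod N) | #A = n ∧ AddDissociated (A : Set (ZMod N))}.ncard := by
  rw [← Set.ncard_image_of_injective _ (map_injective ⟨ZMod.val, ZMod.val_injective N⟩)]
  congr 1
  ext A
  constructor
  · rintro ⟨hA, hAn, hAd⟩
    have hrange : A ⊆ univ.map ⟨ZMod.val, ZMod.val_injective N⟩ := fun x hx ↦ by
      have := mem_Icc.1 (hA hx)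
      exact mem_map.2 ⟨x, mem_univ _, ZMod.val_cast_of_lt (by omega)⟩
    obtain ⟨B, -, rfl⟩ := subset_map_iff.1 hrange
    exact ⟨B, ⟨by simpa using hAn, sumsetDistinctMod_map_val_iff.1 hAd⟩, rfl⟩
  · rintro ⟨B, ⟨hBn, hB⟩, rfl⟩
    exact ⟨map_val_subset_Icc_iff.2 (zero_notMem_of_addDissociated hB), by simpa using hBn,
      sumsetDistinctMod_map_val_iff.2 hB⟩

lemma ncard_addOrderOf_eq_card (G : Type*) [AddGroup G] [IsAddCyclic G] [Finite G] :
    {u : G | addOrderOf u = Nat.card G}.ncard = (Nat.card G).totient := by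
  classical
  have := Fintype.ofFinite G
  rw [Set.ncard_eq_toFinset_card', Set.toFinset_ofPred,
    IsAddCyclic.card_addOrderOf_eq_totient Nat.card_eq_fintype_card.dvd]

end

theorem stmt6 (n : ℕ) (hn : 1 ≤ n) (N : ℕ) (hN : N = 2 ^ n + 1) :
    {A : Finset ℕ | A ⊆ Finset.Icc 1 (N - 1) ∧ A.card = n ∧ SumsetDistinctMod N A}.ncard
      * (2 * n) = 2 ^ n * Nat.totient N := by
  have : NeZero N := ⟨hN.trans_ne (Nat.succ_ne_zero _)⟩
  rw [ncard_sumsetDistinctMod, stmt6_general hn (by simpa using hN), ncard_addOrderOf_eq_card,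
    Nat.card_zmod]
end
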